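/- Let 0 < γ < 1/2, Q(x,y) = |y|^γ, and let Ω ⊆ [a,b] × [c,d] be an open set with 0 < a < b, 0 ≤ c < d ≤ 2γ. Then with F_t(x,y) = (x, y + t x), one has (d/dt)|_{t=0} ∫_{F_{−t}(Ω)} Q(z)² dz ≤ −a · ∫_Ω Q(z)² dz. -/

import Mathlib

open Real MeasureTheory

/-!
Put `p = 2γ`. A shear preserves area, so the integral over `{(x, y + s x) : (x, y) ∈ Ω}` equals
`∫_Ω |y + s x| ^ p`. On bounded sets the map `u ↦ |u| ^ p` satisfies a Lipschitz estimate at `y ≠ 0`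
whose constant is of order `1 + |y| ^ (p - 1)`. As `p > 0`, this is locally integrable, so dominated
convergence gives the derivative `∫_Ω p |y| ^ (p - 2) y x` at `s = 0`. Since `x ≥ a` and
`y ^ p ≤ p y ^ (p - 1)` for `0 < y ≤ p`, it is at least `a ∫_Ω y ^ p`; now put `s = -t`.
-/

section Rpow

variable {p : ℝ}

lemma one_sub_rpow_le_max_mul_one_sub {r : ℝ} (hr₀ : 0 ≤ r) (hr₁ : r ≤ 1) :
    1 - r ^ p ≤ max 1 p * (1 - r) := by
  rcases le_total p 1 with hp | hp
  · rw [max_eq_left hp, one_mul]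
    gcongr
    exact self_le_rpow_of_le_one hr₀ hr₁ hp
  · have bernoulli : 1 + p * (r - 1) ≤ (1 + (r - 1)) ^ p :=
      one_add_mul_self_le_rpow_one_add (by linarith) hp
    rw [add_sub_cancel] at bernoulli
    rw [max_eq_right hp]
    linarith

lemma abs_rpow_sub_rpow_le (hp : 0 ≤ p) {u v : ℝ} (hu : 0 ≤ u) (hv : 0 ≤ v) :
    |u ^ p - v ^ p| ≤ max 1 p * max u v ^ (p - 1) * |u - v| := by
  wlog hvu : v ≤ u generalizing u v
  · simpa only [max_comm, abs_sub_comm] using this hv hu (le_of_not_ge hvu)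
  rcases hu.eq_or_lt with rfl | hu_pos
  · simp [le_antisymm hvu hv]
  rw [max_eq_left hvu, abs_of_nonneg (sub_nonneg.2 (rpow_le_rpow hv hvu hp)),
    abs_of_nonneg (sub_nonneg.2 hvu)]
  calc u ^ p - v ^ p = u ^ p * (1 - (v / u) ^ p) := by
        rw [div_rpow hv hu]
        field_simp
    _ ≤ u ^ p * (max 1 p * (1 - v / u)) := by
        gcongr
        exact one_sub_rpow_le_max_mul_one_sub (by positivity) (div_le_one_of_le₀ hvu hu)
    _ = max 1 p * u ^ (p - 1) * (u - v) := by
        rw [rpow_sub_one hu_pos.ne']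
        field_simp

lemma rpow_le_rpow_add_rpow_of_mem_Icc {q l x M : ℝ} (hl : 0 < l) (hx : x ∈ Set.Icc l M) :
    x ^ q ≤ l ^ q + M ^ q := by
  have hx₀ : 0 < x := hl.trans_le hx.1
  have hM : 0 < M := hx₀.trans_le hx.2
  rcases le_total q 0 with hq | hq
  · exact le_add_of_le_of_nonneg (rpow_le_rpow_of_nonpos hl hx.1 hq) (by positivity)
  · exact le_add_of_nonneg_of_le (by positivity) (rpow_le_rpow hx₀.le hx.2 hq)

lemma abs_abs_add_rpow_sub_abs_rpow_le (hp : 0 ≤ p) {y h M : ℝ} (hy : y ≠ 0)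
    (hM : |y| + |h| ≤ M) :
    |(|y + h| ^ p - |y| ^ p)| ≤ max 1 p * (|y| ^ (p - 1) + M ^ (p - 1)) * |h| := by
  have hmax : max |y + h| |y| ∈ Set.Icc |y| M :=
    ⟨le_max_right _ _, max_le ((abs_add_le y h).trans hM)
      ((le_add_of_nonneg_right (abs_nonneg h)).trans hM)⟩
  have hM₀ : 0 ≤ M := (abs_nonneg y).trans (hmax.1.trans hmax.2)
  have hpow : max |y + h| |y| ^ (p - 1) ≤ |y| ^ (p - 1) + M ^ (p - 1) :=
    rpow_le_rpow_add_rpow_of_mem_Icc (abs_pos.2 hy) hmax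
  have habs : |(|y + h| - |y|)| ≤ |h| := by
    simpa only [add_sub_cancel_left] using abs_abs_sub_abs_le_abs_sub (y + h) y
  calc |(|y + h| ^ p - |y| ^ p)|
      ≤ max 1 p * max |y + h| |y| ^ (p - 1) * |(|y + h| - |y|)| :=
        abs_rpow_sub_rpow_le hp (abs_nonneg _) (abs_nonneg _)
    _ ≤ max 1 p * (|y| ^ (p - 1) + M ^ (p - 1)) * |h| :=
        mul_le_mul (by gcongr) habs (abs_nonneg _) (by positivity)

lemma abs_abs_add_mul_rpow_sub_abs_rpow_le (hp : 0 ≤ p) {x y s R : ℝ} (hy : y ≠ 0)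
    (hxR : |x| ≤ R) (hyR : |y| ≤ R) (hs : |s| ≤ 1) :
    |(|y + s * x| ^ p - |y| ^ p)|
      ≤ max 1 p * (|y| ^ (p - 1) + (2 * R) ^ (p - 1)) * R * |s| := by
  have hR : 0 ≤ R := (abs_nonneg x).trans hxR
  have hsx : |s * x| ≤ R * |s| := by
    rw [abs_mul, mul_comm]
    gcongr
  have hsum : |y| + |s * x| ≤ 2 * R := by
    linarith [mul_le_of_le_one_right hR hs]
  calc |(|y + s * x| ^ p - |y| ^ p)|
      ≤ max 1 p * (|y| ^ (p - 1) + (2 * R) ^ (p - 1)) * |s * x| :=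
        abs_abs_add_rpow_sub_abs_rpow_le hp hy hsum
    _ ≤ max 1 p * (|y| ^ (p - 1) + (2 * R) ^ (p - 1)) * (R * |s|) := by gcongr
    _ = max 1 p * (|y| ^ (p - 1) + (2 * R) ^ (p - 1)) * R * |s| := by ring

lemma hasDerivAt_abs_rpow_of_ne_zero {y : ℝ} (hy : y ≠ 0) :
    HasDerivAt (fun u : ℝ => |u| ^ p) (p * |y| ^ (p - 2) * y) y := by
  have hy' : |y| ≠ 0 := abs_ne_zero.2 hy
  refine ((hasDerivAt_abs hy).rpow_const (Or.inl hy')).congr_deriv ?_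
  calc (SignType.sign y : ℝ) * p * |y| ^ (p - 1)
      = p * |y| ^ (p - 2) * (SignType.sign y * |y|) := by
        rw [show p - 1 = p - 2 + 1 by ring, rpow_add_one hy']
        ring
    _ = p * |y| ^ (p - 2) * y := by rw [sign_mul_abs]

lemma rpow_le_mul_rpow_sub_two_mul {y : ℝ} (hy : 0 < y) (hyp : y ≤ p) :
    y ^ p ≤ p * y ^ (p - 2) * y := by
  calc y ^ p = y * y ^ (p - 2) * y := by
        rw [rpow_sub hy, rpow_two]
        field_simp
    _ ≤ p * y ^ (p - 2) * y := by gcongr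

end Rpow

section Integration

lemma hasDerivAt_integral_of_dominated_loc_of_lip' {α 𝕜 E : Type*} [MeasurableSpace α]
    {μ : Measure α} [RCLike 𝕜] [NormedAddCommGroup E] [NormedSpace ℝ E] [NormedSpace 𝕜 E]
    {F : 𝕜 → α → E} {F' : α → E} {x₀ : 𝕜} {s : Set 𝕜} {bound : α → ℝ} (hs : s ∈ nhds x₀)
    (hF_meas : ∀ x ∈ s, AEStronglyMeasurable (F x) μ) (hF_int : Integrable (F x₀) μ)
    (hF'_meas : AEStronglyMeasurable F' μ)
    (h_lipsch : ∀ᵐ a ∂μ, ∀ x ∈ s, ‖F x a - F x₀ a‖ ≤ bound a * ‖x - x₀‖)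
    (bound_integrable : Integrable bound μ)
    (h_diff : ∀ᵐ a ∂μ, HasDerivAt (F · a) (F' a) x₀) :
    Integrable F' μ ∧ HasDerivAt (fun x => ∫ a, F x a ∂μ) (∫ a, F' a ∂μ) x₀ := by
  let L : E →L[𝕜] 𝕜 →L[𝕜] E := ContinuousLinearMap.smulRightL 𝕜 𝕜 E 1
  obtain ⟨hint, hderiv⟩ := hasFDerivAt_integral_of_dominated_loc_of_lip' hs hF_meas hF_int
    (L.continuous.comp_aestronglyMeasurable hF'_meas) h_lipsch bound_integrable
    (h_diff.mono fun _ h => h.hasFDerivAt)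
  have hF'_int : Integrable F' μ := by
    simpa [L] using hint.apply_continuousLinearMap (1 : 𝕜)
  refine ⟨hF'_int, hderiv.hasDerivAt.congr_deriv ?_⟩
  rw [ContinuousLinearMap.integral_apply hint]
  simp [L]

lemma setIntegral_image_prod_add {α G E : Type*} [MeasurableSpace α] [MeasurableSpace G]
    [AddGroup G] [MeasurableAdd₂ G] [MeasurableSub₂ G] [NormedAddCommGroup E] [NormedSpace ℝ E]
    {μ : Measure α} {ν : Measure G} [SFinite μ] [SFinite ν] [ν.IsAddRightInvariant]
    {φ : α → G} (hφ : Measurable φ) (f : α × G → E) (Ω : Set (α × G)) :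
    ∫ z in (fun z => (z.1, z.2 + φ z.1)) '' Ω, f z ∂μ.prod ν
      = ∫ z in Ω, f (z.1, z.2 + φ z.1) ∂μ.prod ν := by
  let shear : α × G ≃ᵐ α × G :=
    { toFun := fun z => (z.1, z.2 + φ z.1)
      invFun := fun z => (z.1, z.2 - φ z.1)
      left_inv := fun z => by simp
      right_inv := fun z => by simp
      measurable_toFun := measurable_fst.prodMk (measurable_snd.add (hφ.comp measurable_fst))
      measurable_invFun := measurable_fst.prodMk (measurable_snd.sub (hφ.comp measurable_fst)) }
  have shear_preserving : MeasurePreserving shear (μ.prod ν) (μ.prod ν) :=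
    (MeasurePreserving.id μ).skew_product (g := fun x y => y + φ x) (by fun_prop)
      (.of_forall fun x => (measurePreserving_add_right ν (φ x)).map_eq)
  exact shear_preserving.setIntegral_image_emb shear.measurableEmbedding f Ω

lemma locallyIntegrable_comp_snd {X Y E : Type*} [TopologicalSpace X] [MeasurableSpace X]
    [TopologicalSpace Y] [MeasurableSpace Y] [NormedAddCommGroup E] {μ : Measure X}
    {ν : Measure Y} [IsLocallyFiniteMeasure μ] [SFinite μ] [SFinite ν] {f : Y → E}
    (hf : LocallyIntegrable f ν) : LocallyIntegrable (fun z : X × Y => f z.2) (μ.prod ν) := by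
  rintro ⟨x, y⟩
  obtain ⟨s, hs, hμs⟩ := μ.finiteAt_nhds x
  obtain ⟨t, ht, hft⟩ := hf y
  have : IsFiniteMeasure (μ.restrict s) := ⟨by rwa [Measure.restrict_apply_univ]⟩
  refine ⟨s ×ˢ t, prod_mem_nhds hs ht, ?_⟩
  rw [IntegrableOn, ← Measure.prod_restrict]
  exact Integrable.comp_snd hft (μ.restrict s)

lemma locallyIntegrable_abs_rpow {q : ℝ} (hq : -1 < q) :
    LocallyIntegrable fun y : ℝ => |y| ^ q :=
  locallyIntegrable_of_norm_le_rpow (C := 1) (α := -q) (by simp) (by simpa using by linarith)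
    (.of_forall fun y => by simp [abs_of_nonneg (rpow_nonneg (abs_nonneg y) q)])
    (by fun_prop : Measurable fun y : ℝ => |y| ^ q).aestronglyMeasurable

lemma integrableOn_abs_snd_rpow {q : ℝ} (hq : -1 < q) {Ω : Set (ℝ × ℝ)}
    (hΩ : Bornology.IsBounded Ω) : IntegrableOn (fun z : ℝ × ℝ => |z.2| ^ q) Ω :=
  ((locallyIntegrable_comp_snd (locallyIntegrable_abs_rpow hq)).integrableOn_isCompact
    hΩ.isCompact_closure).mono_set subset_closure

lemma ae_snd_ne {X Y : Type*} [MeasurableSpace X] [MeasurableSpace Y] {μ : Measure X}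
    {ν : Measure Y} [SFinite ν] [NullSingletonClass ν] (y : Y) : ∀ᵐ z ∂μ.prod ν, z.2 ≠ y :=
  Measure.quasiMeasurePreserving_snd.ae (Measure.ae_ne ν y)

end Integration

theorem hasDerivAt_setIntegral_abs_add_mul_rpow {p : ℝ} (hp : 0 < p) {Ω : Set (ℝ × ℝ)}
    (hΩ : Bornology.IsBounded Ω) :
    IntegrableOn (fun z : ℝ × ℝ => p * |z.2| ^ (p - 2) * z.2 * z.1) Ω ∧
      HasDerivAt (fun s : ℝ => ∫ z in Ω, |z.2 + s * z.1| ^ p)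
        (∫ z in Ω, p * |z.2| ^ (p - 2) * z.2 * z.1) 0 := by
  obtain ⟨R, hR⟩ := hΩ.subset_closedBall 0
  have mem_ball : ∀ᵐ z ∂volume.restrict Ω, z ∈ Metric.closedBall (0 : ℝ × ℝ) R :=
    ae_restrict_of_ae_restrict_of_subset hR (ae_restrict_mem measurableSet_closedBall)
  have snd_ne_zero : ∀ᵐ z : ℝ × ℝ ∂volume.restrict Ω, z.2 ≠ 0 := ae_restrict_of_ae (ae_snd_ne 0)
  have measurable_integrand (s : ℝ) : Measurable fun z : ℝ × ℝ => |z.2 + s * z.1| ^ p := by fun_prop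
  have measurable_deriv : Measurable fun z : ℝ × ℝ => p * |z.2| ^ (p - 2) * z.2 * z.1 := by fun_prop
  refine hasDerivAt_integral_of_dominated_loc_of_lip' (Metric.closedBall_mem_nhds 0 one_pos)
    (bound := fun z => max 1 p * (|z.2| ^ (p - 1) + (2 * R) ^ (p - 1)) * R)
    (fun s _ => (measurable_integrand s).aestronglyMeasurable) ?_
    measurable_deriv.aestronglyMeasurable ?_ ?_ ?_
  · simpa only [zero_mul, add_zero, IntegrableOn] using
      integrableOn_abs_snd_rpow (q := p) (by linarith) hΩ
  · filter_upwards [mem_ball, snd_ne_zero] with z hz hy s hs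
    obtain ⟨hxR, hyR⟩ : |z.1| ≤ R ∧ |z.2| ≤ R := by
      simpa only [mem_closedBall_zero_iff, norm_prod_le_iff, norm_eq_abs] using hz
    have hs₁ : |s| ≤ 1 := by simpa only [mem_closedBall_zero_iff, norm_eq_abs] using hs
    simpa only [zero_mul, add_zero, sub_zero, norm_eq_abs] using
      abs_abs_add_mul_rpow_sub_abs_rpow_le hp.le hy hxR hyR hs₁
  · exact (((integrableOn_abs_snd_rpow (by linarith) hΩ).add
      (integrableOn_const hΩ.measure_lt_top.ne)).const_mul _).mul_const R
  · filter_upwards [snd_ne_zero] with z hy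
    have hline : HasDerivAt (fun s : ℝ => z.2 + s * z.1) z.1 0 :=
      (hasDerivAt_mul_const z.1).const_add z.2
    exact (hasDerivAt_abs_rpow_of_ne_zero hy).comp_of_eq 0 hline (by simp)

theorem mul_setIntegral_abs_snd_rpow_le {p a b : ℝ} (hp : 0 < p) (ha : 0 ≤ a) {Ω : Set (ℝ × ℝ)}
    (hΩ : Ω ⊆ Set.Icc a b ×ˢ Set.Icc 0 p) :
    a * ∫ z in Ω, |z.2| ^ p ≤ ∫ z in Ω, p * |z.2| ^ (p - 2) * z.2 * z.1 := by
  have hΩ_bdd : Bornology.IsBounded Ω :=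
    ((Metric.isBounded_Icc a b).prod (Metric.isBounded_Icc 0 p)).subset hΩ
  have mem_box : ∀ᵐ z ∂volume.restrict Ω, z ∈ Set.Icc a b ×ˢ Set.Icc 0 p :=
    ae_restrict_of_ae_restrict_of_subset hΩ
      (ae_restrict_mem (measurableSet_Icc.prod measurableSet_Icc))
  have snd_ne_zero : ∀ᵐ z : ℝ × ℝ ∂volume.restrict Ω, z.2 ≠ 0 := ae_restrict_of_ae (ae_snd_ne 0)
  rw [← integral_const_mul]
  refine integral_mono_ae ((integrableOn_abs_snd_rpow (by linarith) hΩ_bdd).const_mul a)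
    (hasDerivAt_setIntegral_abs_add_mul_rpow hp hΩ_bdd).1 ?_
  filter_upwards [mem_box, snd_ne_zero] with z ⟨⟨hax, _⟩, hy₀, hyp⟩ hy
  have hy_pos : 0 < z.2 := hy₀.lt_of_ne' hy
  rw [abs_of_pos hy_pos, mul_comm a]
  gcongr
  exact rpow_le_mul_rpow_sub_two_mul hy_pos hyp

theorem stmt_6_general {γ a b : ℝ} (hγ : 0 < γ) (ha : 0 ≤ a) {Ω : Set (ℝ × ℝ)}
    (hΩ : Ω ⊆ Set.Icc a b ×ˢ Set.Icc 0 (2 * γ)) :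
    deriv (fun t : ℝ =>
        ∫ z in (fun z : ℝ × ℝ => (z.1, z.2 + (-t) * z.1)) '' Ω, (|z.2| ^ γ) ^ 2) 0
      ≤ -a * ∫ z in Ω, (|z.2| ^ γ) ^ 2 := by
  have hsq (y : ℝ) : (|y| ^ γ) ^ 2 = |y| ^ (2 * γ) := by
    rw [mul_comm, rpow_mul (abs_nonneg y), rpow_two]
  have hΩ_bdd : Bornology.IsBounded Ω :=
    ((Metric.isBounded_Icc a b).prod (Metric.isBounded_Icc 0 (2 * γ))).subset hΩ
  have hp : 0 < 2 * γ := by positivity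
  have change_of_variables (s : ℝ) :
      ∫ z in (fun z : ℝ × ℝ => (z.1, z.2 + s * z.1)) '' Ω, |z.2| ^ (2 * γ)
        = ∫ z in Ω, |z.2 + s * z.1| ^ (2 * γ) :=
    setIntegral_image_prod_add (measurable_const_mul s) (fun z => |z.2| ^ (2 * γ)) Ω
  simp only [hsq, change_of_variables]
  rw [deriv_comp_neg (fun s : ℝ => ∫ z in Ω, |z.2 + s * z.1| ^ (2 * γ)), neg_zero,
    (hasDerivAt_setIntegral_abs_add_mul_rpow hp hΩ_bdd).2.deriv, neg_mul, neg_le_neg_iff]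
  exact mul_setIntegral_abs_snd_rpow_le hp ha hΩ

/-- decrease estimate, `0 < γ < 1/2`: with `Q(x,y) = |y|^γ`,
`Ω ⊆ [a,b]×[c,d]` open, `0 < a < b`, `0 ≤ c < d ≤ 2γ`, and
`F_{−t}(Ω) = {(x, y − t x) : (x,y) ∈ Ω}`,
`(d/dt)|_{t=0} ∫_{F_{−t}(Ω)} Q² ≤ −a ∫_Ω Q²`. -/
theorem stmt_6 (γ a b c d : ℝ) (hγ0 : 0 < γ) (hγ : γ < 1 / 2) (ha : 0 < a) (hab : a < b)
    (hc : 0 ≤ c) (hcd : c < d) (hd : d ≤ 2 * γ)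
    (Ω : Set (ℝ × ℝ)) (hΩopen : IsOpen Ω) (hΩ : Ω ⊆ Set.Icc a b ×ˢ Set.Icc c d) :
    deriv (fun t : ℝ =>
        ∫ z in (fun z : ℝ × ℝ => (z.1, z.2 + (-t) * z.1)) '' Ω, (|z.2| ^ γ) ^ 2) 0
      ≤ -a * ∫ z in Ω, (|z.2| ^ γ) ^ 2 :=
  stmt_6_general hγ0 ha.le (hΩ.trans (Set.prod_mono_right (Set.Icc_subset_Icc hc hd)))
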